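/- Let H be a complex separable Hilbert space. A quantum channel Φ: T(H) → T(H) is strongly entanglement breaking if and only if the linear functional Φ̃* on the projective tensor product B(H) ⊗̂ T(H) determined by Φ̃*(Y ⊗ X) = Tr(Φ*(Y) Xᵗ) can be written as Φ̃* = Σ_{k=1}^∞ w_k ⊗ ρ_k, where each w_k is a weak*-continuous positive norm-one linear functional on B(H), each ρ_k is the functional X ↦ Tr(F_k Xᵗ) for some positive operator F_k ∈ B(H), and Σ_{k=1}^∞ F_k = I_H (strong operator topology); here Φ*: B(H) → B(H) is the dual map of Φ and Xᵗ is the transpose with respect to a fixed orthonormal basis {e_i} of H, defined by ⟨e_i, Xᵗ e_j⟩ = ⟨e_j, X e_i⟩. -/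

import Mathlib

noncomputable section

open scoped ComplexInnerProductSpace
open ContinuousLinearMap Filter Topology

/-- The rank-one operator `u v*`, i.e. `x ↦ ⟪v, x⟫ • u`. -/
def rankOne {H K : Type*} [NormedAddCommGroup H] [InnerProductSpace ℂ H]
    [NormedAddCommGroup K] [InnerProductSpace ℂ K] (u : K) (v : H) : H →L[ℂ] K :=
  (ContinuousLinearMap.toSpanSingleton ℂ u).comp (innerSL ℂ v)

/-- An operator is trace class iff the sums `∑ |⟪f i, T (e i)⟫|` over finite orthonormal
families are uniformly bounded (the supremum being the trace norm). -/
def IsTraceClass {H K : Type*} [NormedAddCommGroup H] [InnerProductSpace ℂ H]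
    [NormedAddCommGroup K] [InnerProductSpace ℂ K] (T : H →L[ℂ] K) : Prop :=
  ∃ C : ℝ, ∀ (n : ℕ) (e : Fin n → H) (f : Fin n → K),
    Orthonormal ℂ e → Orthonormal ℂ f → (∑ i, ‖⟪f i, T (e i)⟫‖) ≤ C

/-- The trace norm of an operator. -/
def traceNorm {H K : Type*} [NormedAddCommGroup H] [InnerProductSpace ℂ H]
    [NormedAddCommGroup K] [InnerProductSpace ℂ K] (T : H →L[ℂ] K) : ℝ :=
  sSup { r : ℝ | ∃ (n : ℕ) (e : Fin n → H) (f : Fin n → K),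
    Orthonormal ℂ e ∧ Orthonormal ℂ f ∧ r = ∑ i, ‖⟪f i, T (e i)⟫‖ }

/-- A fixed Hilbert basis of a Hilbert space. -/
def stdONB (H : Type*) [NormedAddCommGroup H] [InnerProductSpace ℂ H] [CompleteSpace H] :
    HilbertBasis (exists_hilbertBasis ℂ H).choose ℂ H :=
  (exists_hilbertBasis ℂ H).choose_spec.choose

/-- The trace of a (trace-class) operator. -/
def Tr {H : Type*} [NormedAddCommGroup H] [InnerProductSpace ℂ H] [CompleteSpace H]
    (T : H →L[ℂ] H) : ℂ :=
  ∑' i, ⟪stdONB H i, T (stdONB H i)⟫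

/-- Convergence of a series of operators in trace norm. -/
def HasSumTN {H K : Type*} [NormedAddCommGroup H] [InnerProductSpace ℂ H]
    [NormedAddCommGroup K] [InnerProductSpace ℂ K] {ι : Type*}
    (f : ι → (H →L[ℂ] K)) (T : H →L[ℂ] K) : Prop :=
  Filter.Tendsto (fun s : Finset ι => traceNorm (T - ∑ k ∈ s, f k)) Filter.atTop (nhds 0)

/-- A state: a positive trace-class operator with trace one. -/
def IsState {H : Type*} [NormedAddCommGroup H] [InnerProductSpace ℂ H] [CompleteSpace H]
    (ρ : H →L[ℂ] H) : Prop :=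
  IsTraceClass ρ ∧ ρ.IsPositive ∧ Tr ρ = 1

/-- Positivity of a finite matrix of operators, viewed as a block operator. -/
def MatPos {H : Type*} [NormedAddCommGroup H] [InnerProductSpace ℂ H] {n : ℕ}
    (M : Fin n → Fin n → (H →L[ℂ] H)) : Prop :=
  ∀ x : Fin n → H,
    0 ≤ (∑ i, ∑ j, ⟪x i, M i j (x j)⟫).re ∧ (∑ i, ∑ j, ⟪x i, M i j (x j)⟫).im = 0

/-- Complete positivity of a linear map on trace-class operators. -/
def IsCompletelyPositive {H K : Type*} [NormedAddCommGroup H] [InnerProductSpace ℂ H]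
    [NormedAddCommGroup K] [InnerProductSpace ℂ K]
    (Φ : (H →L[ℂ] H) →ₗ[ℂ] (K →L[ℂ] K)) : Prop :=
  ∀ (n : ℕ) (M : Fin n → Fin n → (H →L[ℂ] H)),
    (∀ i j, IsTraceClass (M i j)) → MatPos M → MatPos fun i j => Φ (M i j)

/-- A quantum channel: a completely positive trace-preserving linear map on
trace-class operators. -/
structure IsChannel {H K : Type*} [NormedAddCommGroup H] [InnerProductSpace ℂ H]
    [CompleteSpace H] [NormedAddCommGroup K] [InnerProductSpace ℂ K] [CompleteSpace K]
    (Φ : (H →L[ℂ] H) →ₗ[ℂ] (K →L[ℂ] K)) : Prop where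
  maps_traceClass : ∀ X : H →L[ℂ] H, IsTraceClass X → IsTraceClass (Φ X)
  completelyPositive : IsCompletelyPositive Φ
  tracePreserving : ∀ X : H →L[ℂ] H, IsTraceClass X → Tr (Φ X) = Tr X

/-- Strongly entanglement breaking channel: admits a Holevo (measure-and-prepare) form
`Φ(X) = ∑ₖ Tr(Fₖ X) Rₖ` with states `Rₖ` and positive `Fₖ` with `∑ₖ Fₖ = I` (SOT). -/
def IsSEB {H K : Type*} [NormedAddCommGroup H] [InnerProductSpace ℂ H] [CompleteSpace H]
    [NormedAddCommGroup K] [InnerProductSpace ℂ K] [CompleteSpace K]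
    (Φ : (H →L[ℂ] H) →ₗ[ℂ] (K →L[ℂ] K)) : Prop :=
  ∃ (R : ℕ → (K →L[ℂ] K)) (F : ℕ → (H →L[ℂ] H)),
    (∀ k, IsState (R k)) ∧ (∀ k, (F k).IsPositive) ∧
    (∀ x : H, HasSum (fun k => F k x) x) ∧
    ∀ X : H →L[ℂ] H, IsTraceClass X → HasSumTN (fun k => Tr (F k * X) • R k) (Φ X)

/-- The weak* topology on `B(H)`, induced by the pairing with trace-class operators. -/
def weakStarTopology (H : Type*) [NormedAddCommGroup H] [InnerProductSpace ℂ H]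
    [CompleteSpace H] : TopologicalSpace (H →L[ℂ] H) :=
  TopologicalSpace.induced
    (fun Y => fun X : { X : H →L[ℂ] H // IsTraceClass X } => Tr ((X : H →L[ℂ] H) * Y))
    inferInstance

/-!
Normal states on `B(K)` are exactly the functionals `Y ↦ Tr (R Y)` with `R` a state, and
`Tr (Φ* Y · X) = Tr (Φ X · Y)`, so a separable decomposition of the functional evaluated at
`Y ⊗ Xᵗ` is a decomposition `Φ X = ∑ k, Tr (F k X) R k` tested against all bounded `Y`. Such a
series of multiples of states converges in trace norm as soon as it converges weakly* with
`∑ k, |Tr (F k X)| < ∞`, and that summability is the case `Y = 1`. The transpose disappears because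
it is an involution on trace-class operators. Cyclicity of the trace comes from commuting two
Hilbert-Schmidt factors, after writing a trace-class operator as a combination of positive ones.
-/

section TraceNorm

variable {H K : Type*} [NormedAddCommGroup H] [InnerProductSpace ℂ H]
  [NormedAddCommGroup K] [InnerProductSpace ℂ K] {S T : H →L[ℂ] K}

lemma traceNorm_nonneg (T : H →L[ℂ] K) : 0 ≤ traceNorm T := by
  refine Real.sSup_nonneg ?_
  rintro _ ⟨n, e, f, -, -, rfl⟩
  positivity

lemma traceNorm_le {C : ℝ}
    (h : ∀ (n : ℕ) (e : Fin n → H) (f : Fin n → K), Orthonormal ℂ e → Orthonormal ℂ f →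
      ∑ i, ‖⟪f i, T (e i)⟫‖ ≤ C) :
    traceNorm T ≤ C := by
  refine csSup_le ⟨_, 0, Fin.elim0, Fin.elim0, ?_, ?_, rfl⟩ ?_
  · exact ⟨fun i => i.elim0, fun i => i.elim0⟩
  · exact ⟨fun i => i.elim0, fun i => i.elim0⟩
  · rintro _ ⟨n, e, f, he, hf, rfl⟩
    exact h n e f he hf

lemma IsTraceClass.sum_norm_inner_le_traceNorm (hT : IsTraceClass T) {ι : Type*} {e : ι → H}
    {f : ι → K} (he : Orthonormal ℂ e) (hf : Orthonormal ℂ f) (s : Finset ι) :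
    ∑ i ∈ s, ‖⟪f i, T (e i)⟫‖ ≤ traceNorm T := by
  obtain ⟨C, hC⟩ := hT
  have henum : Function.Injective fun k => (s.equivFin.symm k : ι) :=
    Subtype.val_injective.comp s.equivFin.symm.injective
  refine le_csSup ⟨C, ?_⟩ ⟨_, _, _, he.comp _ henum, hf.comp _ henum, ?_⟩
  · rintro _ ⟨n, e, f, he, hf, rfl⟩
    exact hC n e f he hf
  · rw [← Finset.sum_coe_sort]
    exact (Equiv.sum_comp s.equivFin.symm fun i : s => ‖⟪f i, T (e i)⟫‖).symm

lemma IsTraceClass.summable_norm_inner (hT : IsTraceClass T) {ι : Type*} {e : ι → H}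
    {f : ι → K} (he : Orthonormal ℂ e) (hf : Orthonormal ℂ f) :
    Summable fun i => ‖⟪f i, T (e i)⟫‖ :=
  summable_of_sum_le (fun _ => norm_nonneg _) (hT.sum_norm_inner_le_traceNorm he hf)

lemma IsTraceClass.add (hS : IsTraceClass S) (hT : IsTraceClass T) : IsTraceClass (S + T) := by
  refine ⟨traceNorm S + traceNorm T, fun n e f he hf => ?_⟩
  calc ∑ i, ‖⟪f i, (S + T) (e i)⟫‖
      ≤ ∑ i, (‖⟪f i, S (e i)⟫‖ + ‖⟪f i, T (e i)⟫‖) :=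
        Finset.sum_le_sum fun i _ => by
          rw [add_apply, inner_add_right]
          exact norm_add_le _ _
    _ ≤ traceNorm S + traceNorm T := by
        rw [Finset.sum_add_distrib]
        exact add_le_add (hS.sum_norm_inner_le_traceNorm he hf _)
          (hT.sum_norm_inner_le_traceNorm he hf _)

lemma IsTraceClass.sum_norm_inner_smul_le (hT : IsTraceClass T) (c : ℂ) {n : ℕ} {e : Fin n → H}
    {f : Fin n → K} (he : Orthonormal ℂ e) (hf : Orthonormal ℂ f) :
    ∑ i, ‖⟪f i, (c • T) (e i)⟫‖ ≤ ‖c‖ * traceNorm T := by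
  simp only [smul_apply, inner_smul_right, norm_mul, ← Finset.mul_sum]
  exact mul_le_mul_of_nonneg_left (hT.sum_norm_inner_le_traceNorm he hf _) (norm_nonneg c)

lemma IsTraceClass.smul (hT : IsTraceClass T) (c : ℂ) : IsTraceClass (c • T) :=
  ⟨_, fun _ _ _ he hf => hT.sum_norm_inner_smul_le c he hf⟩

lemma IsTraceClass.traceNorm_smul_le (hT : IsTraceClass T) (c : ℂ) :
    traceNorm (c • T) ≤ ‖c‖ * traceNorm T :=
  traceNorm_le fun _ _ _ he hf => hT.sum_norm_inner_smul_le c he hf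

variable (H K) in
/-- The space `T(H, K)` of trace-class operators as a subspace of the bounded operators. It
carries the operator norm; its trace norm is the separate function `traceNorm`. -/
def traceClass : Submodule ℂ (H →L[ℂ] K) where
  carrier := {T | IsTraceClass T}
  add_mem' := IsTraceClass.add
  zero_mem' := ⟨0, by simp⟩
  smul_mem' c _ hT := hT.smul c

-- Finite partial sums already satisfy the bound, and each `∑ i, ‖⟪e i, · (d i)⟫‖` is continuous
-- along the weakly convergent series.
lemma traceNorm_le_tsum_of_hasSum_inner {ι : Type*} {f : ι → H →L[ℂ] K}
    (hf : ∀ k, IsTraceClass (f k)) (hsum : Summable fun k => traceNorm (f k))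
    (hT : ∀ x y, HasSum (fun k => ⟪y, f k x⟫) ⟪y, T x⟫) :
    traceNorm T ≤ ∑' k, traceNorm (f k) := by
  refine traceNorm_le fun n d e hd he => ?_
  refine le_of_tendsto' (tendsto_finsetSum _ fun i _ => (hT (d i) (e i)).norm) fun s => ?_
  calc ∑ i, ‖∑ k ∈ s, ⟪e i, f k (d i)⟫‖
      ≤ ∑ i, ∑ k ∈ s, ‖⟪e i, f k (d i)⟫‖ := Finset.sum_le_sum fun _ _ => norm_sum_le _ _
    _ = ∑ k ∈ s, ∑ i, ‖⟪e i, f k (d i)⟫‖ := Finset.sum_comm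
    _ ≤ ∑ k ∈ s, traceNorm (f k) :=
        Finset.sum_le_sum fun k _ => (hf k).sum_norm_inner_le_traceNorm hd he _
    _ ≤ ∑' k, traceNorm (f k) := hsum.sum_le_tsum s fun _ _ => traceNorm_nonneg _

lemma hasSumTN_of_hasSum_inner {ι : Type*} {f : ι → H →L[ℂ] K}
    (hf : ∀ k, IsTraceClass (f k)) (hsum : Summable fun k => traceNorm (f k))
    (hT : ∀ x y, HasSum (fun k => ⟪y, f k x⟫) ⟪y, T x⟫) :
    HasSumTN f T := by
  refine squeeze_zero (fun _ => traceNorm_nonneg _) (fun s => ?_)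
    (tendsto_tsum_compl_atTop_zero fun k => traceNorm (f k))
  refine traceNorm_le_tsum_of_hasSum_inner (fun k => hf k) (hsum.comp_injective
    Subtype.val_injective) fun x y => (s.hasSum_compl_iff (f := fun k => ⟪y, f k x⟫)).2 ?_
  simpa [inner_sub_right, sum_apply, inner_sum] using hT x y

end TraceNorm

section Ideal

variable {H K : Type*} [NormedAddCommGroup H] [InnerProductSpace ℂ H] [CompleteSpace H]
  [NormedAddCommGroup K] [InnerProductSpace ℂ K] {T : H →L[ℂ] K}

-- `Y` is a combination of four unitaries with coefficients at most `‖Y‖ / 2`, and a unitary maps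
-- orthonormal families to orthonormal families.
lemma IsTraceClass.sum_norm_inner_comp_le (hT : IsTraceClass T) (Y : H →L[ℂ] H) {n : ℕ}
    {e : Fin n → H} {f : Fin n → K} (he : Orthonormal ℂ e) (hf : Orthonormal ℂ f) :
    ∑ i, ‖⟪f i, (T ∘L Y) (e i)⟫‖ ≤ 2 * ‖Y‖ * traceNorm T := by
  obtain ⟨u, c, hY, hc⟩ := CStarAlgebra.exists_sum_four_unitary Y
  have horth (k) : Orthonormal ℂ fun i => (u k : H →L[ℂ] H) (e i) :=
    he.comp_linearIsometryEquiv (Unitary.linearIsometryEquiv (u k))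
  have hexpand (i) : ⟪f i, (T ∘L Y) (e i)⟫ =
      ∑ k, c k * ⟪f i, T ((u k : H →L[ℂ] H) (e i))⟫ := by
    conv_lhs => rw [hY]
    simp [sum_apply, map_sum]
  calc ∑ i, ‖⟪f i, (T ∘L Y) (e i)⟫‖
      ≤ ∑ i, ∑ k, ‖c k‖ * ‖⟪f i, T ((u k : H →L[ℂ] H) (e i))⟫‖ := by
        refine Finset.sum_le_sum fun i _ => ?_
        simp only [hexpand, ← norm_mul]
        exact norm_sum_le _ _
    _ = ∑ k, ‖c k‖ * ∑ i, ‖⟪f i, T ((u k : H →L[ℂ] H) (e i))⟫‖ := by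
        simp only [Finset.mul_sum]
        exact Finset.sum_comm
    _ ≤ ∑ _k : Fin 4, ‖Y‖ / 2 * traceNorm T := by
        gcongr with k
        · exact hc k
        · exact hT.sum_norm_inner_le_traceNorm (horth k) hf _
    _ = 2 * ‖Y‖ * traceNorm T := by
        rw [Finset.sum_const, Finset.card_univ, Fintype.card_fin]
        ring

lemma IsTraceClass.comp_right (hT : IsTraceClass T) (Y : H →L[ℂ] H) : IsTraceClass (T ∘L Y) :=
  ⟨_, fun _ _ _ he hf => hT.sum_norm_inner_comp_le Y he hf⟩

lemma IsTraceClass.traceNorm_comp_le (hT : IsTraceClass T) (Y : H →L[ℂ] H) :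
    traceNorm (T ∘L Y) ≤ 2 * ‖Y‖ * traceNorm T :=
  traceNorm_le fun _ _ _ he hf => hT.sum_norm_inner_comp_le Y he hf

variable [CompleteSpace K]

protected lemma IsTraceClass.adjoint (hT : IsTraceClass T) : IsTraceClass (adjoint T) := by
  refine ⟨traceNorm T, fun n e f he hf => ?_⟩
  simp only [adjoint_inner_right, norm_inner_symm (T _)]
  exact hT.sum_norm_inner_le_traceNorm hf he _

lemma IsTraceClass.comp_left (hT : IsTraceClass T) (Y : K →L[ℂ] K) : IsTraceClass (Y ∘L T) := by
  simpa using (hT.adjoint.comp_right (adjoint Y)).adjoint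

end Ideal

section PositiveParts

variable {H : Type*} [NormedAddCommGroup H] [InnerProductSpace ℂ H] [CompleteSpace H]
  {T : H →L[ℂ] H}

lemma posPart_eq_mul_starProjection_ker_negPart (hT : IsSelfAdjoint T) :
    T⁺ = T * (T⁻).ker.starProjection := by
  set P := (T⁻).ker.starProjection
  have hneg : T⁻ * P = 0 := by
    ext x
    exact (T⁻).ker.starProjection_apply_mem x
  have hpos : P * T⁺ = T⁺ := by
    ext x
    refine Submodule.starProjection_eq_self_iff.2 (?_ : (T⁻ * T⁺) x = 0)
    rw [CFC.negPart_mul_posPart, zero_apply]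
  have hpos' : T⁺ * P = T⁺ := by
    have hP : star P = P := (isSelfAdjoint_starProjection _).star_eq
    simpa [hP, (CFC.posPart_nonneg T).isSelfAdjoint.star_eq] using congrArg star hpos
  calc T⁺ = T⁺ * P - T⁻ * P := by rw [hpos', hneg, sub_zero]
    _ = T * P := by rw [← sub_mul, CFC.posPart_sub_negPart T hT]

lemma IsTraceClass.posPart (hT : IsTraceClass T) (hsa : IsSelfAdjoint T) : IsTraceClass T⁺ :=
  posPart_eq_mul_starProjection_ker_negPart hsa ▸ hT.comp_right _

lemma IsTraceClass.negPart (hT : IsTraceClass T) (hsa : IsSelfAdjoint T) : IsTraceClass T⁻ := by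
  rw [← CFC.posPart_neg]
  exact IsTraceClass.posPart ((traceClass H H).neg_mem hT) hsa.neg

open ComplexStarModule in
lemma span_isTraceClass_isPositive :
    Submodule.span ℂ {R : H →L[ℂ] H | IsTraceClass R ∧ R.IsPositive} = traceClass H H := by
  refine le_antisymm (Submodule.span_le.2 fun R hR => hR.1) fun T hT => ?_
  have hstar : star T ∈ traceClass H H := IsTraceClass.adjoint hT
  have hre : IsTraceClass (ℜ T : H →L[ℂ] H) := by
    rw [realPart_apply_coe, ← Complex.coe_smul]
    exact (traceClass H H).smul_mem _ (add_mem hT hstar)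
  have him : IsTraceClass (ℑ T : H →L[ℂ] H) := by
    rw [imaginaryPart_apply_coe, ← Complex.coe_smul]
    exact (traceClass H H).smul_mem _ ((traceClass H H).smul_mem _ (sub_mem hT hstar))
  rw [← CStarAlgebra.linear_combination_nonneg T]
  refine add_mem (sub_mem ?_ ?_)
    (sub_mem (Submodule.smul_mem _ _ ?_) (Submodule.smul_mem _ _ ?_)) <;>
    refine Submodule.subset_span ⟨?_, (nonneg_iff_isPositive _).1 ?_⟩
  exacts [hre.posPart (ℜ T).2, CFC.posPart_nonneg _, hre.negPart (ℜ T).2, CFC.negPart_nonneg _,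
    him.posPart (ℑ T).2, CFC.posPart_nonneg _, him.negPart (ℑ T).2, CFC.negPart_nonneg _]

end PositiveParts

section Trace

variable {H : Type*} [NormedAddCommGroup H] [InnerProductSpace ℂ H] [CompleteSpace H]
  {S T : H →L[ℂ] H}

lemma IsTraceClass.hasSum_Tr (hT : IsTraceClass T) :
    HasSum (fun i => ⟪stdONB H i, T (stdONB H i)⟫) (Tr T) :=
  (hT.summable_norm_inner (stdONB H).orthonormal (stdONB H).orthonormal).of_norm.hasSum

lemma IsTraceClass.Tr_add (hS : IsTraceClass S) (hT : IsTraceClass T) :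
    Tr (S + T) = Tr S + Tr T := by
  refine HasSum.tsum_eq ?_
  simpa only [add_apply, inner_add_right] using hS.hasSum_Tr.add hT.hasSum_Tr

lemma Tr_smul (c : ℂ) (T : H →L[ℂ] H) : Tr (c • T) = c * Tr T := by
  simp only [Tr, smul_apply, inner_smul_right, tsum_mul_left]

lemma IsTraceClass.norm_Tr_le (hT : IsTraceClass T) : ‖Tr T‖ ≤ traceNorm T :=
  le_of_tendsto' (Tendsto.norm hT.hasSum_Tr) fun s => (norm_sum_le _ _).trans <|
    hT.sum_norm_inner_le_traceNorm (stdONB H).orthonormal (stdONB H).orthonormal s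

lemma IsTraceClass.norm_Tr_mul_le (hT : IsTraceClass T) (Y : H →L[ℂ] H) :
    ‖Tr (T * Y)‖ ≤ 2 * ‖Y‖ * traceNorm T :=
  (hT.comp_right Y).norm_Tr_le.trans (hT.traceNorm_comp_le Y)

variable (H) in
/-- The duality pairing `(Y, R) ↦ Tr (R Y)` of bounded with trace-class operators. The weak
topology it induces on its left argument is `weakStarTopology H`. -/
def tracePairing : (H →L[ℂ] H) →ₗ[ℂ] traceClass H H →ₗ[ℂ] ℂ :=
  LinearMap.mk₂ ℂ (fun Y R => Tr ((R : H →L[ℂ] H) * Y))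
    (fun Y Z R => by rw [mul_add]; exact (R.2.comp_right Y).Tr_add (R.2.comp_right Z))
    (fun c Y R => by rw [mul_smul_comm, Tr_smul, smul_eq_mul])
    (fun Y R S => by
      rw [Submodule.coe_add, add_mul]
      exact (R.2.comp_right Y).Tr_add (S.2.comp_right Y))
    (fun c Y R => by rw [Submodule.coe_smul, smul_mul_assoc, Tr_smul, smul_eq_mul])

lemma HasSumTN.hasSum_Tr_mul {ι : Type*} {f : ι → H →L[ℂ] H} (hsum : HasSumTN f T)
    (hf : ∀ k, IsTraceClass (f k)) (hT : IsTraceClass T) (Y : H →L[ℂ] H) :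
    HasSum (fun k => Tr (f k * Y)) (Tr (T * Y)) := by
  have hpartial (s : Finset ι) :
      Tr (T * Y) - ∑ k ∈ s, Tr (f k * Y) = Tr ((T - ∑ k ∈ s, f k) * Y) := by
    simpa [tracePairing] using
      (map_sub (tracePairing H Y) ⟨T, hT⟩ (∑ k ∈ s, ⟨f k, hf k⟩)).symm
  have htc (s : Finset ι) : IsTraceClass (T - ∑ k ∈ s, f k) :=
    (traceClass H H).sub_mem hT ((traceClass H H).sum_mem fun k _ => hf k)
  have hbound : Tendsto (fun s => 2 * ‖Y‖ * traceNorm (T - ∑ k ∈ s, f k)) atTop (𝓝 0) := by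
    simpa only [mul_zero] using Tendsto.const_mul (2 * ‖Y‖) hsum
  refine tendsto_iff_norm_sub_tendsto_zero.2
    (squeeze_zero (fun _ => norm_nonneg _) (fun s => ?_) hbound)
  rw [norm_sub_rev, hpartial]
  exact (htc s).norm_Tr_mul_le Y

lemma Tr_mul_rankOne (T : H →L[ℂ] H) (u v : H) :
    Tr (T * InnerProductSpace.rankOne ℂ u v) = ⟪v, T u⟫ := by
  simp only [Tr, mul_apply_eq_comp, InnerProductSpace.rankOne_apply, map_smul, inner_smul_right]
  exact (stdONB H).tsum_inner_mul_inner v (T u)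

end Trace

section HilbertBasis

variable {H K : Type*} [NormedAddCommGroup H] [InnerProductSpace ℂ H]
  [NormedAddCommGroup K] [InnerProductSpace ℂ K] {ι κ : Type*}

lemma eq_of_forall_inner_hilbertBasis_eq (b : HilbertBasis ι ℂ H) (c : HilbertBasis κ ℂ K)
    {S T : H →L[ℂ] K} (h : ∀ i j, ⟪c j, S (b i)⟫ = ⟪c j, T (b i)⟫) : S = T := by
  refine ContinuousLinearMap.ext_on
    (Submodule.dense_iff_topologicalClosure_eq_top.2 b.dense_span) ?_
  rintro _ ⟨i, rfl⟩
  refine c.repr.injective (lp.ext (funext fun j => ?_))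
  simpa only [c.repr_apply_apply] using h i j

lemma hasSum_norm_inner_sq (b : HilbertBasis ι ℂ H) (x : H) :
    HasSum (fun i => ‖⟪b i, x⟫‖ ^ 2) (‖x‖ ^ 2) := by
  simpa [b.repr_apply_apply] using lp.hasSum_norm (by norm_num) (b.repr x)

lemma summable_norm_inner_sq_prod (c : HilbertBasis κ ℂ K) {v : ι → K}
    (hv : Summable fun i => ‖v i‖ ^ 2) :
    Summable fun p : ι × κ => ‖⟪c p.2, v p.1⟫‖ ^ 2 := by
  refine (summable_prod_of_nonneg fun _ => sq_nonneg _).2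
    ⟨fun i => (hasSum_norm_inner_sq c (v i)).summable, ?_⟩
  simpa only [fun i => (hasSum_norm_inner_sq c (v i)).tsum_eq] using hv

lemma tsum_inner_comp_comm [CompleteSpace H] [CompleteSpace K] (b : HilbertBasis ι ℂ H)
    (c : HilbertBasis κ ℂ K) {A : K →L[ℂ] H} {B : H →L[ℂ] K}
    (hA : Summable fun i => ‖adjoint A (b i)‖ ^ 2) (hB : Summable fun i => ‖B (b i)‖ ^ 2) :
    ∑' i, ⟪b i, A (B (b i))⟫ = ∑' j, ⟪c j, B (A (c j))⟫ := by
  let g (i : ι) (j : κ) : ℂ := ⟪adjoint A (b i), c j⟫ * ⟪c j, B (b i)⟫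
  have hg : Summable (Function.uncurry g) := by
    refine Summable.of_norm_bounded
      ((summable_norm_inner_sq_prod c hA).add (summable_norm_inner_sq_prod c hB)) fun ⟨i, j⟩ => ?_
    calc ‖g i j‖ = ‖⟪c j, adjoint A (b i)⟫‖ * ‖⟪c j, B (b i)⟫‖ := by
          rw [norm_mul, norm_inner_symm]
      _ ≤ ‖⟪c j, adjoint A (b i)⟫‖ ^ 2 + ‖⟪c j, B (b i)⟫‖ ^ 2 := by
          nlinarith [sq_nonneg (‖⟪c j, adjoint A (b i)⟫‖ - ‖⟪c j, B (b i)⟫‖)]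
  calc ∑' i, ⟪b i, A (B (b i))⟫ = ∑' i, ∑' j, g i j := tsum_congr fun i => by
        rw [c.tsum_inner_mul_inner, adjoint_inner_left]
    _ = ∑' j, ∑' i, g i j := hg.tsum_comm.symm
    _ = ∑' j, ∑' i, ⟪adjoint B (c j), b i⟫ * ⟪b i, A (c j)⟫ := by
        simp only [g, adjoint_inner_left, mul_comm]
    _ = ∑' j, ⟪c j, B (A (c j))⟫ := tsum_congr fun j => by
        rw [b.tsum_inner_mul_inner, adjoint_inner_left]

end HilbertBasis

section PositiveTraceClass

variable {H : Type*} [NormedAddCommGroup H] [InnerProductSpace ℂ H] [CompleteSpace H]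
  {R T : H →L[ℂ] H}

lemma inner_sqrt_left (R : H →L[ℂ] H) (x y : H) :
    ⟪CFC.sqrt R x, y⟫ = ⟪x, CFC.sqrt R y⟫ :=
  ((nonneg_iff_isPositive _).1 (CFC.sqrt_nonneg R)).inner_left_eq_inner_right x y

lemma sqrt_sqrt_apply (hR : R.IsPositive) (x : H) : CFC.sqrt R (CFC.sqrt R x) = R x := by
  rw [← mul_apply_eq_comp (CFC.sqrt R),
    CFC.sqrt_mul_sqrt_self R ((nonneg_iff_isPositive R).2 hR)]

lemma IsTraceClass.hasSum_norm_sqrt_sq (hT : IsTraceClass R) (hR : R.IsPositive) :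
    HasSum (fun i => ‖CFC.sqrt R (stdONB H i)‖ ^ 2) (Tr R).re := by
  simpa [← sqrt_sqrt_apply hR, ← inner_sqrt_left, ← Complex.ofReal_pow] using
    Complex.hasSum_re hT.hasSum_Tr

lemma IsTraceClass.summable_norm_sqrt_comp_sq (hT : IsTraceClass R) (hR : R.IsPositive)
    (Y : H →L[ℂ] H) : Summable fun i => ‖Y (CFC.sqrt R (stdONB H i))‖ ^ 2 := by
  refine .of_nonneg_of_le (fun _ => sq_nonneg _) (fun i => ?_)
    ((hT.hasSum_norm_sqrt_sq hR).summable.mul_left (‖Y‖ ^ 2))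
  rw [← mul_pow]
  gcongr
  exact Y.le_opNorm _

lemma IsTraceClass.Tr_mul_eq_tsum_sqrt (hT : IsTraceClass R) (hR : R.IsPositive)
    (Y : H →L[ℂ] H) :
    Tr (R * Y) = ∑' i, ⟪CFC.sqrt R (stdONB H i), Y (CFC.sqrt R (stdONB H i))⟫ := by
  set S := CFC.sqrt R with hS
  have hadjoint : adjoint (S * Y) = adjoint Y * S := by
    rw [← star_eq_adjoint, star_mul, star_eq_adjoint, (CFC.sqrt_nonneg R).isSelfAdjoint.star_eq]
  calc Tr (R * Y) = ∑' i, ⟪stdONB H i, S ((S * Y) (stdONB H i))⟫ := by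
        simp only [Tr, mul_apply_eq_comp, hS, sqrt_sqrt_apply hR]
    _ = ∑' i, ⟪stdONB H i, (S * Y) (S (stdONB H i))⟫ := by
        refine (tsum_inner_comp_comm (stdONB H) (stdONB H) ?_ ?_).symm
        · simpa only [hadjoint, mul_apply_eq_comp] using
            hT.summable_norm_sqrt_comp_sq hR (adjoint Y)
        · exact (hT.hasSum_norm_sqrt_sq hR).summable
    _ = ∑' i, ⟪S (stdONB H i), Y (S (stdONB H i))⟫ := by
        simp only [mul_apply_eq_comp, hS, inner_sqrt_left]

lemma IsTraceClass.Tr_mul_comm_of_isPositive (hT : IsTraceClass R) (hR : R.IsPositive)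
    (Y : H →L[ℂ] H) : Tr (R * Y) = Tr (Y * R) := by
  rw [hT.Tr_mul_eq_tsum_sqrt hR]
  set S := CFC.sqrt R with hS
  calc ∑' i, ⟪S (stdONB H i), Y (S (stdONB H i))⟫
      = ∑' i, ⟪stdONB H i, S ((Y * S) (stdONB H i))⟫ := by
        simp only [mul_apply_eq_comp, hS, inner_sqrt_left]
    _ = ∑' i, ⟪stdONB H i, (Y * S) (S (stdONB H i))⟫ := by
        refine tsum_inner_comp_comm (stdONB H) (stdONB H) ?_
          (hT.summable_norm_sqrt_comp_sq hR Y)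
        rw [(CFC.sqrt_nonneg R).isSelfAdjoint.adjoint_eq]
        exact (hT.hasSum_norm_sqrt_sq hR).summable
    _ = Tr (Y * R) := by simp only [Tr, mul_apply_eq_comp, hS, sqrt_sqrt_apply hR]

lemma IsTraceClass.Tr_mul_comm (hT : IsTraceClass T) (Y : H →L[ℂ] H) :
    Tr (T * Y) = Tr (Y * T) := by
  have hspan := span_isTraceClass_isPositive (H := H)
  have hmem := hspan.ge hT
  clear hT
  induction hmem using Submodule.span_induction with
  | mem R hR => exact hR.1.Tr_mul_comm_of_isPositive hR.2 Y
  | zero => rw [zero_mul, mul_zero]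
  | add S T hS hT ihS ihT =>
    have hS : IsTraceClass S := hspan.le hS
    have hT : IsTraceClass T := hspan.le hT
    calc Tr ((S + T) * Y) = Tr (S * Y) + Tr (T * Y) := by
          rw [add_mul]
          exact (hS.comp_right Y).Tr_add (hT.comp_right Y)
      _ = Tr (Y * S) + Tr (Y * T) := by rw [ihS, ihT]
      _ = Tr (Y * (S + T)) := by
          rw [mul_add]
          exact ((hS.comp_left Y).Tr_add (hT.comp_left Y)).symm
  | smul c T _ ih => rw [smul_mul_assoc, mul_smul_comm, Tr_smul, Tr_smul, ih]

open ComplexOrder in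
lemma IsTraceClass.Tr_mul_nonneg (hT : IsTraceClass R) (hR : R.IsPositive) {Y : H →L[ℂ] H}
    (hY : Y.IsPositive) : 0 ≤ Tr (R * Y) := by
  rw [hT.Tr_mul_eq_tsum_sqrt hR]
  exact tsum_nonneg fun i => hY.inner_nonneg_right _

lemma IsTraceClass.norm_Tr_mul_le_of_isPositive (hT : IsTraceClass R) (hR : R.IsPositive)
    (Y : H →L[ℂ] H) : ‖Tr (R * Y)‖ ≤ (Tr R).re * ‖Y‖ := by
  rw [hT.Tr_mul_eq_tsum_sqrt hR]
  refine tsum_of_norm_bounded ((hT.hasSum_norm_sqrt_sq hR).mul_right ‖Y‖) fun i => ?_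
  calc ‖⟪CFC.sqrt R (stdONB H i), Y (CFC.sqrt R (stdONB H i))⟫‖
      ≤ ‖CFC.sqrt R (stdONB H i)‖ * (‖Y‖ * ‖CFC.sqrt R (stdONB H i)‖) :=
        (norm_inner_le_norm _ _).trans (by gcongr; exact Y.le_opNorm _)
    _ = ‖CFC.sqrt R (stdONB H i)‖ ^ 2 * ‖Y‖ := by ring

lemma IsTraceClass.sum_norm_sqrt_sq_le (hT : IsTraceClass R) (hR : R.IsPositive) {ι : Type*}
    {e : ι → H} (he : Orthonormal ℂ e) (s : Finset ι) :
    ∑ i ∈ s, ‖CFC.sqrt R (e i)‖ ^ 2 ≤ (Tr R).re := by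
  refine hasSum_le (fun j => ?_)
    (hasSum_sum fun i _ => hasSum_norm_inner_sq (stdONB H) (CFC.sqrt R (e i)))
    (hT.hasSum_norm_sqrt_sq hR)
  calc ∑ i ∈ s, ‖⟪stdONB H j, CFC.sqrt R (e i)⟫‖ ^ 2
      = ∑ i ∈ s, ‖⟪e i, CFC.sqrt R (stdONB H j)⟫‖ ^ 2 := by
        simp only [← inner_sqrt_left, norm_inner_symm]
    _ ≤ ‖CFC.sqrt R (stdONB H j)‖ ^ 2 := he.sum_inner_products_le _

lemma IsTraceClass.traceNorm_le_re_Tr (hT : IsTraceClass R) (hR : R.IsPositive) :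
    traceNorm R ≤ (Tr R).re := by
  refine traceNorm_le fun n e f he hf => ?_
  calc ∑ i, ‖⟪f i, R (e i)⟫‖
      ≤ ∑ i, (‖CFC.sqrt R (f i)‖ ^ 2 + ‖CFC.sqrt R (e i)‖ ^ 2) / 2 := by
        refine Finset.sum_le_sum fun i _ => ?_
        rw [← sqrt_sqrt_apply hR, ← inner_sqrt_left]
        refine (norm_inner_le_norm _ _).trans ?_
        linarith [two_mul_le_add_sq ‖CFC.sqrt R (f i)‖ ‖CFC.sqrt R (e i)‖]
    _ ≤ (Tr R).re := by
        rw [← Finset.sum_div, Finset.sum_add_distrib]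
        linarith [hT.sum_norm_sqrt_sq_le hR he Finset.univ,
          hT.sum_norm_sqrt_sq_le hR hf Finset.univ]

end PositiveTraceClass

section NormalState

variable {H : Type*} [NormedAddCommGroup H] [InnerProductSpace ℂ H] [CompleteSpace H]
  {R T : H →L[ℂ] H} {w : (H →L[ℂ] H) →L[ℂ] ℂ}

lemma continuous_weakStarTopology_iff {φ : (H →L[ℂ] H) →ₗ[ℂ] ℂ} :
    @Continuous _ _ (weakStarTopology H) _ φ ↔
      ∃ R, IsTraceClass R ∧ ∀ Y, φ Y = Tr (R * Y) := by
  constructor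
  · intro hφ
    obtain ⟨R, hR⟩ := LinearMap.dualEmbedding_surjective (tracePairing H) ⟨φ, hφ⟩
    exact ⟨R, R.2, fun Y => (DFunLike.congr_fun hR Y).symm⟩
  · rintro ⟨R, hR, hφ⟩
    exact (WeakBilin.eval_continuous (tracePairing H) ⟨R, hR⟩).congr fun Y => (hφ Y).symm

open ComplexOrder in
lemma isPositive_of_forall_Tr_mul_nonneg
    (h : ∀ Y : H →L[ℂ] H, Y.IsPositive → 0 ≤ Tr (R * Y)) : R.IsPositive := by
  refine (isPositive_iff_complex R).2 fun x => ?_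
  have hx : 0 ≤ ⟪R x, x⟫ := by
    rw [← inner_conj_symm, ← Tr_mul_rankOne]
    exact star_nonneg_iff.2 (h _ (InnerProductSpace.isPositive_rankOne_self x))
  exact ⟨(Complex.eq_re_of_ofReal_le hx).symm, (Complex.nonneg_iff.1 hx).1⟩

lemma IsTraceClass.norm_eq_re_Tr (hT : IsTraceClass R) (hR : R.IsPositive)
    (hw : ∀ Y, w Y = Tr (R * Y)) : ‖w‖ = (Tr R).re := by
  refine le_antisymm (w.opNorm_le_bound ?_ fun Y => hw Y ▸ hT.norm_Tr_mul_le_of_isPositive hR Y) ?_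
  · exact (traceNorm_nonneg R).trans (hT.traceNorm_le_re_Tr hR)
  · calc (Tr R).re = (w 1).re := by rw [hw, mul_one]
      _ ≤ ‖w 1‖ := Complex.re_le_norm _
      _ ≤ ‖w‖ * ‖(1 : H →L[ℂ] H)‖ := w.le_opNorm 1
      _ ≤ ‖w‖ := mul_le_of_le_one_right (norm_nonneg w) norm_id_le

/-- A normal state on `B(H)`: a weak*-continuous positive functional of norm one. -/
structure IsNormalState (w : (H →L[ℂ] H) →L[ℂ] ℂ) : Prop where
  continuous : @Continuous _ _ (weakStarTopology H) _ w
  nonneg : ∀ Y : H →L[ℂ] H, Y.IsPositive → 0 ≤ (w Y).re ∧ (w Y).im = 0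
  norm_eq_one : ‖w‖ = 1

lemma isNormalState_iff_exists_isState :
    IsNormalState w ↔ ∃ R, IsState R ∧ ∀ Y, w Y = Tr (R * Y) := by
  constructor
  · intro hw
    obtain ⟨R, hT, hwR : ∀ Y, w Y = Tr (R * Y)⟩ :=
      (continuous_weakStarTopology_iff (φ := w.toLinearMap)).1 hw.continuous
    have hR : R.IsPositive := isPositive_of_forall_Tr_mul_nonneg fun Y hY => by
      obtain ⟨hre, him⟩ := hw.nonneg Y hY
      exact hwR Y ▸ Complex.nonneg_iff.2 ⟨hre, him.symm⟩
    refine ⟨R, ⟨hT, hR, Complex.ext ?_ ?_⟩, hwR⟩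
    · rw [← hT.norm_eq_re_Tr hR hwR, hw.norm_eq_one, Complex.one_re]
    · rw [← mul_one R, ← hwR, (hw.nonneg 1 isPositive_one).2, Complex.one_im]
  · rintro ⟨R, ⟨hT, hR, hTr⟩, hwR⟩
    refine ⟨continuous_weakStarTopology_iff (φ := w.toLinearMap).2 ⟨R, hT, hwR⟩, fun Y hY => ?_, ?_⟩
    · obtain ⟨hre, him⟩ := Complex.nonneg_iff.1 (hT.Tr_mul_nonneg hR hY)
      exact hwR Y ▸ ⟨hre, him.symm⟩
    · rw [hT.norm_eq_re_Tr hR hwR, hTr, Complex.one_re]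

lemma IsState.exists_isNormalState (hR : IsState R) :
    ∃ w, IsNormalState w ∧ ∀ Y, w Y = Tr (R * Y) := by
  let w := ((tracePairing H).flip ⟨R, hR.1⟩).mkContinuous (Tr R).re
    (hR.1.norm_Tr_mul_le_of_isPositive hR.2.1)
  exact ⟨w, isNormalState_iff_exists_isState.2 ⟨R, hR, fun _ => rfl⟩, fun _ => rfl⟩

lemma hasSumTN_smul_iff_hasSum_Tr_mul {ι : Type*} {c : ι → ℂ} {R : ι → H →L[ℂ] H}
    (hR : ∀ k, IsState (R k)) (hT : IsTraceClass T) :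
    HasSumTN (fun k => c k • R k) T ↔
      ∀ Y, HasSum (fun k => c k * Tr (R k * Y)) (Tr (T * Y)) := by
  have htc (k) : IsTraceClass (c k • R k) := (hR k).1.smul (c k)
  refine ⟨fun h Y => ?_, fun h => hasSumTN_of_hasSum_inner htc ?_ fun x y => ?_⟩
  · simpa only [smul_mul_assoc, Tr_smul] using h.hasSum_Tr_mul htc hT Y
  · have hc : Summable c := by
      simpa only [mul_one, (hR _).2.2] using (h 1).summable
    refine hc.norm.of_nonneg_of_le (fun k => traceNorm_nonneg _) fun k => ?_
    refine ((hR k).1.traceNorm_smul_le (c k)).trans (mul_le_of_le_one_right (norm_nonneg _) ?_)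
    simpa only [(hR k).2.2, Complex.one_re] using (hR k).1.traceNorm_le_re_Tr (hR k).2.1
  · simpa only [Tr_mul_rankOne, smul_apply, inner_smul_right] using
      h (InnerProductSpace.rankOne ℂ x y)

end NormalState

section EntanglementBreaking

variable {H K : Type*} [NormedAddCommGroup H] [InnerProductSpace ℂ H] [CompleteSpace H]
  [NormedAddCommGroup K] [InnerProductSpace ℂ K] [CompleteSpace K] {ι : Type*}

lemma isSEB_iff_exists_isNormalState {Φ : (H →L[ℂ] H) →ₗ[ℂ] (K →L[ℂ] K)}
    (hΦ : ∀ X, IsTraceClass X → IsTraceClass (Φ X)) {Φs : (K →L[ℂ] K) → (H →L[ℂ] H)}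
    (hdual : ∀ X Y, IsTraceClass X → Tr (Φ X * Y) = Tr (X * Φs Y)) :
    IsSEB Φ ↔ ∃ (w : ℕ → (K →L[ℂ] K) →L[ℂ] ℂ) (F : ℕ → H →L[ℂ] H),
      (∀ k, IsNormalState (w k)) ∧ (∀ k, (F k).IsPositive) ∧
      (∀ x, HasSum (fun k => F k x) x) ∧
      ∀ Y X, IsTraceClass X → HasSum (fun k => w k Y * Tr (F k * X)) (Tr (Φs Y * X)) := by
  constructor
  · rintro ⟨R, F, hR, hF, hFsum, hRF⟩
    choose w hw hwR using fun k => (hR k).exists_isNormalState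
    refine ⟨w, F, hw, hF, hFsum, fun Y X hX => ?_⟩
    simpa only [hwR, mul_comm (Tr (R _ * Y)), hdual X Y hX, hX.Tr_mul_comm (Φs Y)] using
      (hasSumTN_smul_iff_hasSum_Tr_mul hR (hΦ X hX)).1 (hRF X hX) Y
  · rintro ⟨w, F, hw, hF, hFsum, hwF⟩
    choose R hR hwR using fun k => isNormalState_iff_exists_isState.1 (hw k)
    refine ⟨R, F, hR, hF, hFsum, fun X hX => ?_⟩
    refine (hasSumTN_smul_iff_hasSum_Tr_mul hR (hΦ X hX)).2 fun Y => ?_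
    simpa only [hwR, mul_comm (Tr (R _ * Y)), hdual X Y hX, hX.Tr_mul_comm (Φs Y)] using
      hwF Y X hX

theorem SEB_iff_functional_countably_separable_general (e : HilbertBasis ι ℂ H)
    (Φ : (H →L[ℂ] H) →ₗ[ℂ] (K →L[ℂ] K)) (hΦ : ∀ X, IsTraceClass X → IsTraceClass (Φ X))
    (Φs : (K →L[ℂ] K) → (H →L[ℂ] H))
    (hdual : ∀ X Y, IsTraceClass X → Tr (Φ X * Y) = Tr (X * Φs Y))
    (transp : (H →L[ℂ] H) → (H →L[ℂ] H))
    (htransp_tc : ∀ X, IsTraceClass X → IsTraceClass (transp X))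
    (htransp : ∀ X, IsTraceClass X → ∀ i j, ⟪e i, transp X (e j)⟫ = ⟪e j, X (e i)⟫) :
    IsSEB Φ ↔
    ∃ (w : ℕ → ((K →L[ℂ] K) →L[ℂ] ℂ)) (F : ℕ → (H →L[ℂ] H)),
      (∀ k, @Continuous _ _ (weakStarTopology K) _ (w k)) ∧
      (∀ k, ∀ Y : K →L[ℂ] K, Y.IsPositive → 0 ≤ (w k Y).re ∧ (w k Y).im = 0) ∧
      (∀ k, ‖w k‖ = 1) ∧
      (∀ k, (F k).IsPositive) ∧
      (∀ x, HasSum (fun k => F k x) x) ∧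
      ∀ Y X, IsTraceClass X →
        HasSum (fun k => w k Y * Tr (F k * transp X)) (Tr (Φs Y * transp X)) := by
  have htransp_transp (X) (hX : IsTraceClass X) : transp (transp X) = X :=
    eq_of_forall_inner_hilbertBasis_eq e e fun i j => by
      rw [htransp _ (htransp_tc X hX), htransp X hX]
  rw [isSEB_iff_exists_isNormalState hΦ hdual]
  constructor
  · rintro ⟨w, F, hw, hF, hFsum, hwF⟩
    exact ⟨w, F, fun k => (hw k).continuous, fun k => (hw k).nonneg, fun k => (hw k).norm_eq_one,
      hF, hFsum, fun Y X hX => hwF Y (transp X) (htransp_tc X hX)⟩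
  · rintro ⟨w, F, hcont, hnonneg, hnorm, hF, hFsum, hwF⟩
    refine ⟨w, F, fun k => ⟨hcont k, hnonneg k, hnorm k⟩, hF, hFsum, fun Y X hX => ?_⟩
    simpa only [htransp_transp X hX] using hwF Y (transp X) (htransp_tc X hX)

end EntanglementBreaking

/-- A quantum channel `Φ` on `T(H)` is strongly entanglement breaking
iff the linear functional `Φ̃*` on `B(H) ⊗̂ T(H)` determined by
`Φ̃*(Y ⊗ X) = Tr(Φ*(Y) Xᵗ)` can be written as `Φ̃* = ∑ₖ wₖ ⊗ ρₖ` with `wₖ`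
weak*-continuous positive norm-one functionals on `B(H)` and `ρₖ(X) = Tr(Fₖ Xᵗ)` for
positive `Fₖ` with `∑ₖ Fₖ = I` (SOT).  (Since the elementary tensors span a dense
subspace of the projective tensor product, the identity of functionals is expressed by
its values on elementary tensors `Y ⊗ X`.) -/
theorem SEB_iff_functional_countably_separable
    {H : Type*} [NormedAddCommGroup H] [InnerProductSpace ℂ H] [CompleteSpace H]
    [TopologicalSpace.SeparableSpace H]
    (e : HilbertBasis ℕ ℂ H)
    (Φ : (H →L[ℂ] H) →ₗ[ℂ] (H →L[ℂ] H)) (hΦ : IsChannel Φ)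
    (Φs : (H →L[ℂ] H) →ₗ[ℂ] (H →L[ℂ] H))
    (hdual : ∀ (X Y : H →L[ℂ] H), IsTraceClass X → Tr (Φ X * Y) = Tr (X * Φs Y))
    (transp : (H →L[ℂ] H) → (H →L[ℂ] H))
    (htransp_tc : ∀ X : H →L[ℂ] H, IsTraceClass X → IsTraceClass (transp X))
    (htransp : ∀ X : H →L[ℂ] H, IsTraceClass X →
      ∀ i j, ⟪e i, transp X (e j)⟫ = ⟪e j, X (e i)⟫) :
    IsSEB Φ ↔
    ∃ (w : ℕ → ((H →L[ℂ] H) →L[ℂ] ℂ)) (F : ℕ → (H →L[ℂ] H)),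
      (∀ k, @Continuous _ _ (weakStarTopology H) _ (w k)) ∧
      (∀ k, ∀ Y : H →L[ℂ] H, Y.IsPositive → 0 ≤ (w k Y).re ∧ (w k Y).im = 0) ∧
      (∀ k, ‖w k‖ = 1) ∧
      (∀ k, (F k).IsPositive) ∧
      (∀ x : H, HasSum (fun k => F k x) x) ∧
      (∀ (Y X : H →L[ℂ] H), IsTraceClass X →
        HasSum (fun k => w k Y * Tr (F k * transp X)) (Tr (Φs Y * transp X))) :=
  SEB_iff_functional_countably_separable_general e Φ hΦ.maps_traceClass Φs hdual transp
    htransp_tc htransp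

end
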